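/- Let F₁, F₂ : ℝ^n ⇒ ℝ^p be nearly convex set-valued mappings with ri(dom F₁) ∩ ri(dom F₂) ≠ ∅. Then ri(gph(F₁ + F₂)) = {(x, y) ∈ ℝ^n × ℝ^p | x ∈ ri(dom F₁) ∩ ri(dom F₂) and y ∈ ri F₁(x) + ri F₂(x)}, where (F₁ + F₂)(x) = F₁(x) + F₂(x) is the pointwise Minkowski sum. -/

import Mathlib

/-!
Over a finite-dimensional space a nearly convex set `C ⊆ S ⊆ closure C` has the same affine hull and
the same relative interior as the convex set `C`. Hence it obeys the segment rule: a point strictly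
between a point of `ri S` and a point of `S` lies in `ri S` (`NearlyConvex.seg_mem_ri`), while
conversely a segment ending in `ri S` can be prolonged a little inside `S` (`exists_prolong`).
These two facts show that `ri` commutes with linear images (`NearlyConvex.ri_image`) and with
intersections with affine subspaces that meet the relative interior (`NearlyConvex.ri_inter`); it
commutes with products of arbitrary sets (`ri_prod`).

Applied to the projection of a graph to its domain and to the fibres of that projection, they give
`ri (gph F) = {(x, y) | x ∈ ri (dom F), y ∈ ri (F x)}` (`mem_ri_gph`). The graph of `F₁ + F₂` is
the image of `(gph F₁ × gph F₂) ∩ {((x₁, y₁), (x₂, y₂)) | x₁ = x₂}` under the linear map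
`((x₁, y₁), (x₂, y₂)) ↦ (x₁, y₁ + y₂)`, and the qualification condition says exactly that the
relative interior of the product meets the subspace `x₁ = x₂`.
-/

open Set Metric Pointwise

noncomputable section

/-- A set is *nearly convex* if it lies between a convex set and its closure. -/
def NearlyConvex {E : Type*} [NormedAddCommGroup E] [NormedSpace ℝ E] (s : Set E) : Prop :=
  ∃ C : Set E, Convex ℝ C ∧ C ⊆ s ∧ s ⊆ closure C

/-- The *relative interior* of a set: points `a ∈ s` admitting `δ > 0` with
`B(a,δ) ∩ aff s ⊆ s`. -/
def ri {E : Type*} [NormedAddCommGroup E] [NormedSpace ℝ E] (s : Set E) : Set E :=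
  {a | a ∈ s ∧ ∃ δ > 0, Metric.ball a δ ∩ (affineSpan ℝ s : Set E) ⊆ s}

/-- The graph of a set-valued mapping. -/
def gph {E P : Type*} (F : E → Set P) : Set (E × P) := {q | q.2 ∈ F q.1}

/-- The domain of a set-valued mapping. -/
def domSV {E P : Type*} (F : E → Set P) : Set E := {x | (F x).Nonempty}

section RelativeInterior

variable {E F : Type*} [NormedAddCommGroup E] [NormedSpace ℝ E]
  [NormedAddCommGroup F] [NormedSpace ℝ F]

theorem ri_eq_intrinsicInterior (s : Set E) : ri s = intrinsicInterior ℝ s := by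
  ext a
  simp only [ri, mem_ofPred_eq, mem_intrinsicInterior, mem_interior_iff_mem_nhds,
    Metric.mem_nhds_iff]
  constructor
  · rintro ⟨ha, δ, hδ, h⟩
    exact ⟨⟨a, subset_affineSpan ℝ s ha⟩, ⟨δ, hδ, fun y hy => h ⟨hy, y.2⟩⟩, rfl⟩
  · rintro ⟨y, ⟨δ, hδ, h⟩, rfl⟩
    exact ⟨h (Metric.mem_ball_self hδ), δ, hδ, fun z hz => @h ⟨z, hz.2⟩ hz.1⟩

theorem ri_subset (s : Set E) : ri s ⊆ s := fun _ h => h.1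

theorem ri_prod (s : Set E) (t : Set F) : ri (s ×ˢ t) = ri s ×ˢ ri t := by
  simp only [ri_eq_intrinsicInterior, intrinsicInterior_prod_eq]

theorem ri_singleton (x : E) : ri ({x} : Set E) = {x} := by
  simp [ri_eq_intrinsicInterior]

theorem exists_prolong {s : Set E} {x y : E} (hx : x ∈ ri s) (hy : y ∈ affineSpan ℝ s) :
    ∃ t : ℝ, 0 < t ∧ x + t • (x - y) ∈ s := by
  obtain ⟨hxs, δ, hδ, h⟩ := hx
  have hN : 0 < ‖x - y‖ + 1 := by positivity
  refine ⟨δ / (‖x - y‖ + 1), by positivity, h ⟨?_, ?_⟩⟩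
  · rw [mem_ball_iff_norm, add_sub_cancel_left, norm_smul, Real.norm_of_nonneg (by positivity),
      div_mul_eq_mul_div, div_lt_iff₀ hN]
    nlinarith
  · have := AffineMap.lineMap_mem (Q := affineSpan ℝ s) (-(δ / (‖x - y‖ + 1)))
      (subset_affineSpan ℝ s hxs) hy
    rw [AffineMap.lineMap_apply_module'] at this
    rw [SetLike.mem_coe]
    convert this using 1
    module

/-- If `z = x + t (x - y)` prolongs the segment from `y` to `x`, then `x` is a convex combination
of `y` and `z` in which `y` has positive weight. -/
theorem eq_comb_of_prolong {t : ℝ} (ht : 0 < t) (x y : E) :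
    x = (t / (1 + t)) • y + (1 - t / (1 + t)) • (x + t • (x - y)) := by
  have h : 1 + t ≠ 0 := by positivity
  match_scalars <;> field_simp <;> ring

theorem NearlyConvex.prod {s : Set E} {t : Set F} (hs : NearlyConvex s) (ht : NearlyConvex t) :
    NearlyConvex (s ×ˢ t) := by
  obtain ⟨C, hC, h₁, h₂⟩ := hs
  obtain ⟨D, hD, h₃, h₄⟩ := ht
  exact ⟨C ×ˢ D, hC.prod hD, prod_mono h₁ h₃, by
    rw [closure_prod_eq]; exact prod_mono h₂ h₄⟩

theorem fst_image_gph {X Y : Type*} (G : X → Set Y) : Prod.fst '' gph G = domSV G := by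
  ext x
  simp [gph, domSV, Set.Nonempty]

variable [FiniteDimensional ℝ E]

theorem closure_subset_affineSpan (s : Set E) : closure s ⊆ affineSpan ℝ s :=
  closure_minimal (subset_affineSpan ℝ s) (AffineSubspace.closed_of_finiteDimensional _)

theorem affineSpan_eq_of_between {C s : Set E} (h₁ : C ⊆ s) (h₂ : s ⊆ closure C) :
    affineSpan ℝ s = affineSpan ℝ C :=
  le_antisymm (affineSpan_le.2 (h₂.trans (closure_subset_affineSpan C))) (affineSpan_mono ℝ h₁)

theorem Convex.seg_mem_ri {C : Set E} (hC : Convex ℝ C) {y z : E} (hy : y ∈ ri C)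
    (hz : z ∈ closure C) {t : ℝ} (ht : 0 < t) (ht1 : t ≤ 1) : t • y + (1 - t) • z ∈ ri C := by
  obtain ⟨hyC, δ, hδ, h⟩ := hy
  obtain ⟨z', hz'C, hz'⟩ := Metric.mem_closure_iff.1 hz (t * δ / 2) (by positivity)
  -- `w` near the given point is a combination of `z' ∈ C` and a point `y'` near `y`, so in `C`.
  have key : ball (t • y + (1 - t) • z) (t * δ / 2) ∩ (affineSpan ℝ C : Set E) ⊆ C := by
    rintro w ⟨hw, hwC⟩
    set y' := z' + t⁻¹ • (w - z') with hy'
    have hyC' : y' ∈ C := by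
      apply h
      constructor
      · have e : y' - y = t⁻¹ • ((w - (t • y + (1 - t) • z)) + (1 - t) • (z - z')) := by
          rw [hy']
          match_scalars <;> field_simp <;> ring
        rw [mem_ball_iff_norm, e, norm_smul, Real.norm_of_nonneg (by positivity),
          inv_mul_lt_iff₀ ht]
        rw [mem_ball_iff_norm] at hw
        rw [dist_eq_norm] at hz'
        have h3 : ‖(1 - t) • (z - z')‖ ≤ ‖z - z'‖ := by
          rw [norm_smul, Real.norm_of_nonneg (by linarith)]
          nlinarith [norm_nonneg (z - z')]
        have := norm_add_le (w - (t • y + (1 - t) • z)) ((1 - t) • (z - z'))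
        linarith
      · have := AffineMap.lineMap_mem (Q := affineSpan ℝ C) t⁻¹
          (subset_affineSpan ℝ C hz'C) hwC
        rw [AffineMap.lineMap_apply_module'] at this
        rw [SetLike.mem_coe]
        convert this using 1
        rw [hy']
        module
    have := hC hyC' hz'C ht.le (sub_nonneg.2 ht1) (by ring)
    convert this using 1
    rw [hy']
    match_scalars <;> field_simp <;> ring
  have hmem : t • y + (1 - t) • z ∈ affineSpan ℝ C := by
    have := AffineMap.lineMap_mem (Q := affineSpan ℝ C) t
      (closure_subset_affineSpan C hz) (subset_affineSpan ℝ C hyC)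
    rw [AffineMap.lineMap_apply_module'] at this
    convert this using 1
    module
  exact ⟨key ⟨mem_ball_self (by positivity), hmem⟩, _, by positivity, key⟩

theorem ri_eq_of_between {C s : Set E} (hC : Convex ℝ C) (h₁ : C ⊆ s) (h₂ : s ⊆ closure C) :
    ri s = ri C := by
  have haff := affineSpan_eq_of_between h₁ h₂
  apply Subset.antisymm
  · intro x hx
    have hne : C.Nonempty := closure_nonempty_iff.1 ⟨x, h₂ hx.1⟩
    obtain ⟨c, hc⟩ := hne.intrinsicInterior hC
    rw [← ri_eq_intrinsicInterior] at hc
    obtain ⟨t, ht, hz⟩ := exists_prolong hx (subset_affineSpan ℝ s (h₁ hc.1))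
    rw [eq_comb_of_prolong ht x c]
    exact hC.seg_mem_ri hc (h₂ hz) (by positivity) ((div_le_one (by positivity)).2 (by linarith))
  · rintro x ⟨hx, δ, hδ, h⟩
    exact ⟨h₁ hx, δ, hδ, by rw [haff]; exact h.trans h₁⟩

theorem NearlyConvex.seg_mem_ri {s : Set E} (hs : NearlyConvex s) {y z : E} (hy : y ∈ ri s)
    (hz : z ∈ s) {t : ℝ} (ht : 0 < t) (ht1 : t ≤ 1) : t • y + (1 - t) • z ∈ ri s := by
  obtain ⟨C, hC, h₁, h₂⟩ := hs
  rw [ri_eq_of_between hC h₁ h₂] at hy ⊢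
  exact hC.seg_mem_ri hy (h₂ hz) ht ht1

theorem NearlyConvex.mem_ri_of_prolong {s : Set E} (hs : NearlyConvex s) {x y : E}
    (hy : y ∈ ri s) {t : ℝ} (ht : 0 < t) (hz : x + t • (x - y) ∈ s) : x ∈ ri s := by
  rw [eq_comb_of_prolong ht x y]
  exact hs.seg_mem_ri hy hz (by positivity) ((div_le_one (by positivity)).2 (by linarith))

theorem NearlyConvex.ri_nonempty {s : Set E} (hs : NearlyConvex s) (hne : s.Nonempty) :
    (ri s).Nonempty := by
  obtain ⟨C, hC, h₁, h₂⟩ := hs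
  rw [ri_eq_of_between hC h₁ h₂, ri_eq_intrinsicInterior]
  exact (closure_nonempty_iff.1 (hne.mono h₂)).intrinsicInterior hC

theorem NearlyConvex.image {s : Set E} (hs : NearlyConvex s) (A : E →ₗ[ℝ] F) :
    NearlyConvex (A '' s) := by
  obtain ⟨C, hC, h₁, h₂⟩ := hs
  exact ⟨A '' C, hC.linear_image A, image_mono h₁, (image_mono h₂).trans
    (image_closure_subset_closure_image A.continuous_of_finiteDimensional)⟩

theorem NearlyConvex.inter {s : Set E} (hs : NearlyConvex s) (M : AffineSubspace ℝ E)
    (hne : (ri s ∩ M).Nonempty) : NearlyConvex (s ∩ M) := by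
  obtain ⟨c, hc, hcM⟩ := hne
  refine ⟨ri s ∩ M, ?_, inter_subset_inter_left _ (ri_subset s), ?_⟩
  · refine Convex.inter ?_ M.convex
    intro x hx y hy a b ha hb hab
    obtain rfl : b = 1 - a := by linarith
    rcases ha.eq_or_lt with rfl | ha
    · simpa using hy
    · exact hs.seg_mem_ri hx hy.1 ha (by linarith)
  · rintro z ⟨hz, hzM⟩
    -- `z` is the limit as `t → 0⁺` of the points `t c + (1 - t) z`, which lie in `ri s ∩ M`.
    have hcont : Continuous fun t : ℝ => t • c + (1 - t) • z := by fun_prop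
    have h0 : Filter.Tendsto (fun t : ℝ => t • c + (1 - t) • z) (nhdsWithin 0 (Ioi 0))
        (nhds z) := by
      have := hcont.tendsto 0
      simp only [zero_smul, sub_zero, one_smul, zero_add] at this
      exact this.mono_left nhdsWithin_le_nhds
    refine mem_closure_of_tendsto h0 ?_
    filter_upwards [Ioc_mem_nhdsGT (zero_lt_one' ℝ)] with t ht
    exact ⟨hs.seg_mem_ri hc hz ht.1 ht.2,
      M.convex hcM hzM ht.1.le (sub_nonneg.2 ht.2) (by ring)⟩

theorem NearlyConvex.ri_inter {s : Set E} (hs : NearlyConvex s) (M : AffineSubspace ℝ E)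
    (hne : (ri s ∩ M).Nonempty) : ri (s ∩ M) = ri s ∩ M := by
  obtain ⟨c, hc, hcM⟩ := hne
  apply Subset.antisymm
  · intro x hx
    obtain ⟨t, ht, hz⟩ := exists_prolong hx (subset_affineSpan ℝ _ ⟨hc.1, hcM⟩)
    exact ⟨hs.mem_ri_of_prolong hc ht hz.1, hx.1.2⟩
  · rintro x ⟨⟨hx, δ, hδ, h⟩, hxM⟩
    refine ⟨⟨hx, hxM⟩, δ, hδ, fun w hw => ⟨h ⟨hw.1, ?_⟩, ?_⟩⟩
    · exact affineSpan_mono ℝ inter_subset_left hw.2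
    · exact affineSpan_le.2 inter_subset_right hw.2

variable [FiniteDimensional ℝ F]

theorem NearlyConvex.ri_image {s : Set E} (hs : NearlyConvex s) (A : E →ₗ[ℝ] F) :
    ri (A '' s) = A '' ri s := by
  apply Subset.antisymm
  · intro u hu
    obtain ⟨c, hc⟩ := hs.ri_nonempty (image_nonempty.1 ⟨u, hu.1⟩)
    obtain ⟨t, ht, w, hw, hwu⟩ :=
      exists_prolong hu (subset_affineSpan ℝ _ (mem_image_of_mem A hc.1))
    refine ⟨_, hs.seg_mem_ri (t := t / (1 + t)) hc hw (by positivity)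
      ((div_le_one (by positivity)).2 (by linarith)), ?_⟩
    rw [map_add, map_smul, map_smul, hwu, ← eq_comb_of_prolong ht]
  · rintro _ ⟨x, hx, rfl⟩
    obtain ⟨v, hv⟩ := (hs.image A).ri_nonempty ⟨_, mem_image_of_mem A hx.1⟩
    obtain ⟨y, hy, rfl⟩ := hv.1
    obtain ⟨t, ht, hz⟩ := exists_prolong hx (subset_affineSpan ℝ _ hy)
    refine (hs.image A).mem_ri_of_prolong hv ht ⟨_, hz, ?_⟩
    simp

theorem ri_domSV {G : E → Set F} (hG : NearlyConvex (gph G)) :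
    ri (domSV G) = Prod.fst '' ri (gph G) := by
  rw [← fst_image_gph]
  exact hG.ri_image (LinearMap.fst ℝ E F)

theorem mem_ri_gph {G : E → Set F} (hG : NearlyConvex (gph G)) (x : E) (y : F) :
    (x, y) ∈ ri (gph G) ↔ x ∈ ri (domSV G) ∧ y ∈ ri (G x) := by
  have main : x ∈ ri (domSV G) → ((x, y) ∈ ri (gph G) ↔ y ∈ ri (G x)) := by
    intro hx
    rw [ri_domSV hG] at hx
    obtain ⟨⟨x', y'⟩, hxy, rfl⟩ := hx
    let M : AffineSubspace ℝ (E × F) :=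
      (affineSpan ℝ {x'}).comap (LinearMap.fst ℝ E F).toAffineMap
    have hM : ∀ q : E × F, q ∈ (M : Set (E × F)) ↔ q.1 = x' := by
      intro q
      simp [M]
    have h1 := hG.ri_inter M ⟨(x', y'), hxy, (hM _).2 rfl⟩
    have h2 : gph G ∩ M = {x'} ×ˢ G x' := by
      ext ⟨a, b⟩
      simp only [mem_inter_iff, hM, gph, mem_ofPred_eq, mem_prod, mem_singleton_iff]
      constructor
      · rintro ⟨h, rfl⟩
        exact ⟨rfl, h⟩
      · rintro ⟨rfl, h⟩
        exact ⟨h, rfl⟩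
    rw [h2, ri_prod, ri_singleton] at h1
    have h3 := Set.ext_iff.1 h1 (x', y)
    simp only [mem_inter_iff, hM, mem_prod, mem_singleton_iff, true_and, and_true] at h3
    exact h3.symm
  constructor
  · intro h
    have hx : x ∈ ri (domSV G) := by
      rw [ri_domSV hG]
      exact ⟨_, h, rfl⟩
    exact ⟨hx, (main hx).1 h⟩
  · rintro ⟨hx, hy⟩
    exact (main hx).2 hy

end RelativeInterior

theorem ri_gph_sum (n p : ℕ)
    (F₁ F₂ : EuclideanSpace ℝ (Fin n) → Set (EuclideanSpace ℝ (Fin p)))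
    (hF₁ : NearlyConvex (gph F₁)) (hF₂ : NearlyConvex (gph F₂))
    (hqc : (ri (domSV F₁) ∩ ri (domSV F₂)).Nonempty) :
    ri (gph (fun x => F₁ x + F₂ x)) =
      {q : EuclideanSpace ℝ (Fin n) × EuclideanSpace ℝ (Fin p) |
        q.1 ∈ ri (domSV F₁) ∩ ri (domSV F₂) ∧ q.2 ∈ ri (F₁ q.1) + ri (F₂ q.1)} := by
  let E := EuclideanSpace ℝ (Fin n)
  let P := EuclideanSpace ℝ (Fin p)
  let L : (E × P) × (E × P) →ₗ[ℝ] E :=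
    LinearMap.fst ℝ E P ∘ₗ LinearMap.fst ℝ (E × P) (E × P) -
      LinearMap.fst ℝ E P ∘ₗ LinearMap.snd ℝ (E × P) (E × P)
  let A : (E × P) × (E × P) →ₗ[ℝ] E × P :=
    (LinearMap.fst ℝ E P ∘ₗ LinearMap.fst ℝ (E × P) (E × P)).prod
      (LinearMap.snd ℝ E P ∘ₗ LinearMap.fst ℝ (E × P) (E × P) +
        LinearMap.snd ℝ E P ∘ₗ LinearMap.snd ℝ (E × P) (E × P))
  let M : AffineSubspace ℝ ((E × P) × (E × P)) := (LinearMap.ker L).toAffineSubspace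
  have hM : ∀ q : (E × P) × (E × P), q ∈ (M : Set ((E × P) × (E × P))) ↔ q.1.1 = q.2.1 := by
    intro q
    simp [M, L, sub_eq_zero]
  have hA : ∀ q, A q = (q.1.1, q.1.2 + q.2.2) := fun q => rfl
  have hG := hF₁.prod hF₂
  have hne : (ri (gph F₁ ×ˢ gph F₂) ∩ M).Nonempty := by
    obtain ⟨x, hx₁, hx₂⟩ := hqc
    rw [ri_domSV hF₁] at hx₁
    rw [ri_domSV hF₂] at hx₂
    obtain ⟨q₁, hq₁, h₁⟩ := hx₁
    obtain ⟨q₂, hq₂, h₂⟩ := hx₂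
    exact ⟨(q₁, q₂), by rw [ri_prod]; exact ⟨hq₁, hq₂⟩, (hM _).2 (h₁.trans h₂.symm)⟩
  have himg : gph (fun x => F₁ x + F₂ x) = A '' (gph F₁ ×ˢ gph F₂ ∩ M) := by
    ext ⟨x, y⟩
    constructor
    · rintro ⟨y₁, h₁, y₂, h₂, rfl⟩
      exact ⟨((x, y₁), (x, y₂)), ⟨⟨h₁, h₂⟩, (hM _).2 rfl⟩, rfl⟩
    · rintro ⟨⟨⟨x₁, y₁⟩, ⟨x₂, y₂⟩⟩, ⟨⟨h₁, h₂⟩, h₃⟩, h⟩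
      obtain rfl : x₁ = x₂ := (hM _).1 h₃
      rw [hA] at h
      obtain ⟨rfl, rfl⟩ := Prod.mk.inj h
      exact ⟨y₁, h₁, y₂, h₂, rfl⟩
  rw [himg, (hG.inter M hne).ri_image A, hG.ri_inter M hne, ri_prod]
  ext ⟨x, y⟩
  constructor
  · rintro ⟨⟨⟨x₁, y₁⟩, ⟨x₂, y₂⟩⟩, ⟨⟨h₁, h₂⟩, h₃⟩, h⟩
    obtain rfl : x₁ = x₂ := (hM _).1 h₃
    rw [hA] at h
    obtain ⟨rfl, rfl⟩ := Prod.mk.inj h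
    obtain ⟨hx₁, hy₁⟩ := (mem_ri_gph hF₁ _ _).1 h₁
    obtain ⟨hx₂, hy₂⟩ := (mem_ri_gph hF₂ _ _).1 h₂
    exact ⟨⟨hx₁, hx₂⟩, y₁, hy₁, y₂, hy₂, rfl⟩
  · rintro ⟨⟨hx₁, hx₂⟩, y₁, hy₁, y₂, hy₂, rfl⟩
    exact ⟨((x, y₁), (x, y₂)), ⟨⟨(mem_ri_gph hF₁ _ _).2 ⟨hx₁, hy₁⟩,
      (mem_ri_gph hF₂ _ _).2 ⟨hx₂, hy₂⟩⟩, (hM _).2 rfl⟩, rfl⟩
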